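/- Let s be a square-free positive integer and m a positive integer. Then there exist integers t₁ and x₁ such that s·((4m+1)t₁² - x₁²) is positive and is a sum of three integer squares. -/

import Mathlib

/-- A nearest-integer shift. -/
lemma exists_shift (a r : ℤ) (ha : 0 < a) : ∃ k : ℤ, 4 * (r + k * a) ^ 2 ≤ a ^ 2 := by
  refine ⟨-((2 * r + a) / (2 * a)), ?_⟩
  have h1 := Int.mul_ediv_add_emod (2 * r + a) (2 * a)
  have h2 := Int.emod_nonneg (2 * r + a) (show 2 * a ≠ 0 by omega)
  have h3 := Int.emod_lt_of_pos (2 * r + a) (show 0 < 2 * a by omega)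
  set k := (2 * r + a) / (2 * a)
  set w := (2 * r + a) % (2 * a)
  have h4 : 2 * (r + -k * a) = w - a := by linarith
  have h5 : 4 * (r + -k * a) ^ 2 = (w - a) ^ 2 := by rw [← h4]; ring
  rw [h5]
  nlinarith

/-- Binary positive definite forms of determinant one take sums of two squares as values. -/
lemma binary_good (N : ℕ) : ∀ a b r : ℤ, 0 < a → a ≤ N → a * b - r ^ 2 = 1 →
    ∀ x y : ℤ, ∃ u v : ℤ, a * x ^ 2 + 2 * r * x * y + b * y ^ 2 = u ^ 2 + v ^ 2 := by
  induction N with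
  | zero => intro a b r h1 h2; simp at h2; omega
  | succ N ih =>
    intro a b r ha haN hdet x y
    by_cases h1 : a = 1
    · subst h1
      exact ⟨x + r * y, y, by linear_combination y ^ 2 * hdet⟩
    obtain ⟨k, hk⟩ := exists_shift a r ha
    set r' := r + k * a with hr'
    set b' := b + 2 * k * r + k ^ 2 * a with hb'
    have hdet' : a * b' - r' ^ 2 = 1 := by rw [hr', hb']; linear_combination hdet
    have hb0 : 0 < b' := by
      by_contra h
      nlinarith [sq_nonneg r', mul_nonneg ha.le (show 0 ≤ -b' by omega)]
    have hlt : b' < a := by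
      by_contra h
      have : a * a ≤ a * b' := by nlinarith
      have e5 : 2 ≤ a := by omega
      have e6 : 2 * 2 ≤ a * a := mul_le_mul e5 e5 (by norm_num) ha.le
      linarith [pow_two a]
    push_cast at haN
    obtain ⟨u, v, huv⟩ := ih b' a r' hb0 (by omega) (by linarith) y (x - k * y)
    refine ⟨u, v, ?_⟩
    rw [← huv, hr', hb']; ring

lemma reduced_false (a b r d F E : ℤ) (ha : 2 ≤ a) (hd : 0 < d) (hk : 4 * r ^ 2 ≤ a ^ 2)
    (hl : 4 * E ^ 2 ≤ d ^ 2) (h1 : a * b - r ^ 2 = d) (h2 : d * F - E ^ 2 = a)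
    (hb : a ≤ b) (hF : d ≤ F) : False := by
  have e1 : d * d ≤ d * F := mul_le_mul_of_nonneg_left hF hd.le
  have e2 : 3 * d ^ 2 ≤ 4 * a := by linarith [pow_two d]
  have e3 : a * a ≤ a * b := mul_le_mul_of_nonneg_left hb (by omega)
  have e4 : 3 * a ^ 2 ≤ 4 * d := by linarith [pow_two a]
  have e5 : 2 * a ≤ a ^ 2 := by nlinarith
  have e6 : 3 ≤ d := by omega
  have e7 : 3 * d ≤ d ^ 2 := by nlinarith
  omega

/-- Ternary positive definite forms of determinant one take sums of three squares as values. -/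
lemma ternary_good (N : ℕ) : ∀ M : ℕ, ∀ a b c r q p : ℤ, 0 < a → a ≤ N → 0 < a * b - r ^ 2 →
    a * b - r ^ 2 ≤ M →
    a * b * c + 2 * r * q * p - a * p ^ 2 - b * q ^ 2 - c * r ^ 2 = 1 →
    ∀ x y z : ℤ, ∃ u v w : ℤ, a * x ^ 2 + b * y ^ 2 + c * z ^ 2 + 2 * r * x * y + 2 * q * x * z
      + 2 * p * y * z = u ^ 2 + v ^ 2 + w ^ 2 := by
  induction N with
  | zero => intro M a b c r q p h1 h2; simp at h2; omega
  | succ N ihN =>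
    intro M
    induction M with
    | zero => intro a b c r q p _ _ h1 h2; simp at h2; omega
    | succ M ihM =>
      intro a b c r q p ha haN hD hDM hdet x y z
      push_cast at haN hDM
      by_cases h1 : a = 1
      · subst h1
        obtain ⟨v, w, hvw⟩ := binary_good (1 * b - r ^ 2).toNat (1 * b - r ^ 2) (c - q ^ 2)
          (p - r * q) hD (by omega) (by linear_combination hdet) y z
        exact ⟨x + r * y + q * z, v, w, by linear_combination hvw⟩
      obtain ⟨k, hk⟩ := exists_shift a r ha
      set r' := r + k * a with hr'
      set b' := b + 2 * k * r + k ^ 2 * a with hb'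
      have hD' : a * b' - r' ^ 2 = a * b - r ^ 2 := by rw [hr', hb']; ring
      have hb0 : 0 < b' := by
        by_contra h
        nlinarith [sq_nonneg r', mul_nonneg ha.le (show 0 ≤ -b' by omega)]
      by_cases hlt : b' < a
      · obtain ⟨u, v, w, h⟩ := ihN (b' * a - r' ^ 2).toNat b' a c r' (p + k * q) q hb0 (by omega)
          (by linarith) (by omega) (by rw [hr', hb']; linear_combination hdet) y (x - k * y) z
        refine ⟨u, v, w, ?_⟩
        rw [← h, hr', hb']; ring
      · set d := a * b - r ^ 2 with hd
        obtain ⟨l, hl⟩ := exists_shift d (a * p - r * q) hD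
        set E := a * p - r * q + l * d with hE
        set c' := c + 2 * l * p + l ^ 2 * b with hc'
        set q' := q + l * r with hq'
        set F := a * c' - q' ^ 2 with hF
        have hdF : d * F - E ^ 2 = a := by
          rw [hF, hE, hc', hq', hd]; linear_combination a * hdet
        have hF0 : 0 < F := by
          by_contra h
          nlinarith [sq_nonneg E, mul_nonneg hD.le (show 0 ≤ -F by omega)]
        have hFd : F < d := by
          by_contra h
          exact reduced_false a b' r' d F E (by omega) hD hk hl hD' hdF (by omega) (by omega)
        obtain ⟨u, v, w, h⟩ := ihM a c' b q' r (p + l * b) ha (by push_cast; omega) hF0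
          (by omega) (by rw [hc', hq']; linear_combination hdet) x z (y - l * z)
        refine ⟨u, v, w, ?_⟩
        rw [← h, hc', hq']; ring

lemma sum_three_of_dvd (n d e : ℤ) (hd : 0 < d) (hb : 0 < d * n - 1)
    (h : d * n - 1 ∣ e ^ 2 + d) : ∃ x y z : ℤ, n = x ^ 2 + y ^ 2 + z ^ 2 := by
  obtain ⟨a, ha⟩ := h
  have ha0 : 0 < a := by
    by_contra h
    nlinarith [sq_nonneg e, mul_nonneg hb.le (show 0 ≤ -a by omega)]
  have hD : a * (d * n - 1) - e ^ 2 = d := by linarith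
  obtain ⟨u, v, w, h⟩ := ternary_good a.toNat d.toNat a (d * n - 1) n e 1 0 ha0 (by omega)
    (by omega) (by omega) (by linear_combination n * hD) 0 0 1
  exact ⟨u, v, w, by linarith⟩

lemma exists_sq_of_jacobi (p : ℕ) (hp : p.Prime) (d : ℤ) (h : jacobiSym d p = 1) :
    ∃ e : ℤ, (p : ℤ) ∣ e ^ 2 - d := by
  have := Fact.mk hp
  rw [← jacobiSym.legendreSym.to_jacobiSym] at h
  have h0 : (d : ZMod p) ≠ 0 := by
    intro h0
    rw [(legendreSym.eq_zero_iff p d).2 h0] at h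
    omega
  obtain ⟨y, hy⟩ := (legendreSym.eq_one_iff p h0).1 h
  obtain ⟨e, rfl⟩ := ZMod.intCast_surjective y
  refine ⟨e, ?_⟩
  rw [← ZMod.intCast_zmod_eq_zero_iff_dvd]
  push_cast
  rw [hy]; ring

lemma three_sq_two_mod_four (n : ℕ) (hn : n % 4 = 2) :
    ∃ x y z : ℤ, (n : ℤ) = x ^ 2 + y ^ 2 + z ^ 2 := by
  have hcop : Nat.Coprime (n - 1) (4 * n) := by
    apply Nat.Coprime.mul_right
    · have : Nat.Coprime (n - 1) (2 ^ 2) := by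
        apply Nat.Coprime.pow_right
        rw [Nat.coprime_two_right]; exact Nat.odd_iff.2 (by omega)
      simpa using this
    · have := Nat.coprime_self_add_right (m := n - 1) (n := 1)
      rw [show n - 1 + 1 = n by omega] at this
      simp [this]
  obtain ⟨p, hpn, hp, hmod⟩ := Nat.forall_exists_prime_gt_and_modEq n (by omega) hcop
  obtain ⟨v, hv⟩ := (Nat.modEq_iff_dvd' (by omega)).1 hmod.symm
  have hpd : p = 4 * n * v + (n - 1) := by omega
  have hpZ : (p : ℤ) = ((4 * v + 1 : ℕ) : ℤ) * n - 1 := by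
    rw [hpd]; push_cast [show 1 ≤ n by omega]; ring
  have hp4 : p % 4 = 1 := by
    rw [hpd, mul_assoc]; omega
  have hj : jacobiSym (-((4 * v + 1 : ℕ) : ℤ)) p = 1 := by
    have hodd : Odd (4 * v + 1) := Nat.odd_iff.2 (by omega)
    rw [jacobiSym.neg _ (Nat.odd_iff.2 (by omega)), ZMod.χ₄_nat_one_mod_four hp4, one_mul,
      ← jacobiSym.quadratic_reciprocity_one_mod_four hp4 hodd, jacobiSym.mod_left,
      show ((p : ℤ) % ((4 * v + 1 : ℕ) : ℤ)) = (-1) % ((4 * v + 1 : ℕ) : ℤ) by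
        rw [hpZ, sub_eq_add_neg, Int.mul_add_emod_self_left], ← jacobiSym.mod_left,
      jacobiSym.at_neg_one hodd, ZMod.χ₄_nat_one_mod_four (by omega)]
  obtain ⟨e, he⟩ := exists_sq_of_jacobi p hp _ hj
  have := hp.pos
  exact sum_three_of_dvd n ((4 * v + 1 : ℕ) : ℤ) e (by positivity) (by rw [← hpZ]; omega)
    (by rw [← hpZ]; rwa [sub_neg_eq_add] at he)

lemma three_sq_one_mod_eight (n : ℕ) (hn : n % 8 = 1) :
    ∃ x y z : ℤ, (n : ℤ) = x ^ 2 + y ^ 2 + z ^ 2 := by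
  by_cases hn1 : n = 1
  · exact ⟨1, 0, 0, by simp [hn1]⟩
  obtain ⟨c, hc⟩ : ∃ c, 2 * c + 1 = 3 * n := ⟨(3 * n - 1) / 2, by omega⟩
  have hcop : Nat.Coprime c (4 * n) := by
    apply Nat.Coprime.mul_right
    · have : Nat.Coprime c (2 ^ 2) := by
        apply Nat.Coprime.pow_right
        rw [Nat.coprime_two_right]; exact Nat.odd_iff.2 (by omega)
      simpa using this
    · rw [← Nat.isCoprime_iff_coprime]
      exact ⟨-2, 3, by push_cast [← @Nat.cast_inj ℤ] at hc; linarith⟩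
  obtain ⟨p, hpn, hp, hmod⟩ := Nat.forall_exists_prime_gt_and_modEq (2 * n) (by omega) hcop
  obtain ⟨v, hv⟩ := (Nat.modEq_iff_dvd' (by omega)).1 hmod.symm
  have hpd : p = 4 * n * v + c := by omega
  have hcZ : 2 * (c : ℤ) + 1 = 3 * n := by exact_mod_cast hc
  have hpZ : 2 * (p : ℤ) = ((8 * v + 3 : ℕ) : ℤ) * n - 1 := by
    rw [hpd]; push_cast; linear_combination hcZ
  have hp4 : p % 4 = 1 := by
    rw [hpd, mul_assoc]; omega
  have hodd : Odd (8 * v + 3) := Nat.odd_iff.2 (by omega)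
  have hj : jacobiSym (-((8 * v + 3 : ℕ) : ℤ)) p = 1 := by
    have h2p : jacobiSym (2 * (p : ℤ)) (8 * v + 3) = -1 := by
      rw [jacobiSym.mod_left,
        show ((2 * (p : ℤ)) % ((8 * v + 3 : ℕ) : ℤ)) = (-1) % ((8 * v + 3 : ℕ) : ℤ) by
          rw [hpZ, sub_eq_add_neg, Int.mul_add_emod_self_left], ← jacobiSym.mod_left,
        jacobiSym.at_neg_one hodd, ZMod.χ₄_nat_three_mod_four (by omega)]
    have h2 : jacobiSym 2 (8 * v + 3) = -1 := by
      rw [jacobiSym.at_two hodd, ZMod.χ₈_nat_eq_if_mod_eight]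
      rw [if_neg (by omega), if_neg (by omega)]
    rw [jacobiSym.mul_left, h2] at h2p
    rw [jacobiSym.neg _ (Nat.odd_iff.2 (by omega)), ZMod.χ₄_nat_one_mod_four hp4, one_mul,
      ← jacobiSym.quadratic_reciprocity_one_mod_four hp4 hodd]
    linarith
  obtain ⟨e, he⟩ := exists_sq_of_jacobi p hp _ hj
  have := hp.pos
  -- adjust the parity of the root
  obtain ⟨e', ho, he'⟩ : ∃ e' : ℤ, e' % 2 = 1 ∧ (p : ℤ) ∣ e' ^ 2 + ((8 * v + 3 : ℕ) : ℤ) := by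
    rw [sub_neg_eq_add] at he
    rcases Int.emod_two_eq_zero_or_one e with h | h
    · refine ⟨e + p, by omega, ?_⟩
      have : (e + p) ^ 2 + ((8 * v + 3 : ℕ) : ℤ) = e ^ 2 + ((8 * v + 3 : ℕ) : ℤ)
        + p * (2 * e + p) := by ring
      rw [this]
      exact dvd_add he (dvd_mul_right _ _)
    · exact ⟨e, h, he⟩
  refine sum_three_of_dvd n ((8 * v + 3 : ℕ) : ℤ) e' (by positivity) (by rw [← hpZ]; omega) ?_
  rw [← hpZ]
  apply IsCoprime.mul_dvd _ _ he'
  · exact ⟨-((p : ℤ) / 2), 1, by omega⟩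
  · have h3 : (e' ^ 2) % 2 = 1 := by rw [pow_two, Int.mul_emod, ho]; rfl
    push_cast
    omega

/-- For `s` square-free positive and `m` positive, there exist integers `t₁, x₁` with
`s((4m+1)t₁² - x₁²)` positive and a sum of three integer squares. -/
theorem stmt_10 (s m : ℕ) (hs : Squarefree s) (hs' : 0 < s) (hm : 0 < m) :
    ∃ t₁ x₁ : ℤ, 0 < (s : ℤ) * ((4 * m + 1) * t₁ ^ 2 - x₁ ^ 2) ∧
      ∃ a b c : ℤ, (s : ℤ) * ((4 * m + 1) * t₁ ^ 2 - x₁ ^ 2) = a ^ 2 + b ^ 2 + c ^ 2 := by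
  have key : ∀ (t x : ℤ) (k : ℕ), (4 * (m : ℤ) + 1) * t ^ 2 - x ^ 2 = k → 0 < k →
      ((s % 8) * (k % 8) % 8 = 1 ∨ (s % 4) * (k % 4) % 4 = 2) →
      ∃ t₁ x₁ : ℤ, 0 < (s : ℤ) * ((4 * m + 1) * t₁ ^ 2 - x₁ ^ 2) ∧
      ∃ a b c : ℤ, (s : ℤ) * ((4 * m + 1) * t₁ ^ 2 - x₁ ^ 2) = a ^ 2 + b ^ 2 + c ^ 2 := by
    intro t x k hk hk0 h
    refine ⟨t, x, ?_, ?_⟩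
    · rw [hk]; positivity
    · rw [hk, ← Nat.cast_mul]
      rcases h with h | h
      · exact three_sq_one_mod_eight _ (by rw [Nat.mul_mod]; exact h)
      · exact three_sq_two_mod_four _ (by rw [Nat.mul_mod]; exact h)
  have h4 : s % 4 ≠ 0 := by
    intro h
    have := hs 2 (by omega)
    simp at this
  have hcase : s % 4 = 2 ∨ s % 8 = 1 ∨ s % 8 = 5 ∨ s % 8 = 3 ∨ s % 8 = 7 := by omega
  have hm2 : m % 2 = 0 ∨ m % 2 = 1 := by omega
  rcases hcase with h | h | h | h | h
  · exact key 1 0 (4 * m + 1) (by push_cast; ring) (by omega)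
      (Or.inr (by rw [h, show (4 * m + 1) % 4 = 1 by omega]))
  · rcases hm2 with h2 | h2
    · exact key 1 0 (4 * m + 1) (by push_cast; ring) (by omega)
        (Or.inl (by rw [h, show (4 * m + 1) % 8 = 1 by omega]))
    · exact key 1 2 (4 * m - 3) (by push_cast [show 3 ≤ 4 * m by omega]; ring) (by omega)
        (Or.inl (by rw [h, show (4 * m - 3) % 8 = 1 by omega]))
  · rcases hm2 with h2 | h2
    · exact key 1 2 (4 * m - 3) (by push_cast [show 3 ≤ 4 * m by omega]; ring) (by omega)
        (Or.inl (by rw [h, show (4 * m - 3) % 8 = 5 by omega]))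
    · exact key 1 0 (4 * m + 1) (by push_cast; ring) (by omega)
        (Or.inl (by rw [h, show (4 * m + 1) % 8 = 5 by omega]))
  · exact key 2 1 (16 * m + 3) (by push_cast; ring) (by omega)
      (Or.inl (by rw [h, show (16 * m + 3) % 8 = 3 by omega]))
  · exact key 4 1 (64 * m + 15) (by push_cast; ring) (by omega)
      (Or.inl (by rw [h, show (64 * m + 15) % 8 = 7 by omega]))
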